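/- Let f be an inner function with f(0)=0, and let 𝒜_1,…,𝒜_p be finite sets of positive integers with max 𝒜_k < min 𝒜_{k+1} for k=1,…,p−1. Let {a_n} be complex numbers and ξ_k = Σ_{n∈𝒜_k} a_n f^n. Then ∫_{∂𝔻} ∏_{k=1}^p |ξ_k|² dm = ∏_{k=1}^p ∫_{∂𝔻} |ξ_k|² dm; i.e., the squared moduli of partial sums over separated blocks are uncorrelated. -/

import Mathlib

open MeasureTheory Set Metric Filter Complex

/-- Normalized Lebesgue (arc-length) measure on the unit circle, as a measure on ℂ. -/
noncomputable def m : Measure ℂ :=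
  (ENNReal.ofReal (2 * Real.pi))⁻¹ •
    (Measure.map (fun θ : ℝ => Complex.exp ((θ : ℂ) * Complex.I))
      (volume.restrict (Set.Ioc (0:ℝ) (2 * Real.pi))))

/-- `spow F ε n` is `F^[n]` if `ε = 1` and its complex conjugate if `ε = -1`. -/
noncomputable def spow (F : ℂ → ℂ) (ε : ℤ) (n : ℕ) (z : ℂ) : ℂ :=
  if ε = 1 then F^[n] z else (starRingEnd ℂ) (F^[n] z)

/-!
An inner function `f` fixing the origin preserves `m` on the circle, because the mean value property
gives `∫ F ^ k = f 0 ^ k = 0` for `k ≥ 1`. Applied to `z * f ^ k` and `(f / z) * f ^ k`, it shows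
that the conditional expectation of the identity given `F` is `β F`, where `β` is the conjugate of
`deriv f 0`. Hence, for `n ≤ l ≤ N`, the conditional expectation of `F^[n] * conj F^[l]` given
`F^[N]` is the constant `β ^ (l - n)`. So the squared modulus of a block with exponents at most `N`
is uncorrelated with every function of `F^[N]`, in particular with the product of the later blocks.
-/

open scoped Topology ComplexConjugate

section CircleMeasure

instance isProbabilityMeasure_m : IsProbabilityMeasure m := by
  constructor
  rw [m, Measure.smul_apply, Measure.map_apply (by fun_prop) MeasurableSet.univ]
  simp only [preimage_univ, Measure.restrict_apply_univ, Real.volume_Ioc, sub_zero, smul_eq_mul]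
  exact ENNReal.inv_mul_cancel (by simp [Real.pi_pos]) ENNReal.ofReal_ne_top

theorem ae_m_norm_eq_one : ∀ᵐ z ∂m, ‖z‖ = 1 := by
  refine Measure.ae_smul_measure ?_ _
  rw [ae_map_iff (by fun_prop) (measurableSet_eq_fun (by fun_prop) (by fun_prop))]
  exact ae_of_all _ norm_exp_ofReal_mul_I

variable {E : Type*} [NormedAddCommGroup E]

theorem aestronglyMeasurable_m_of_continuousOn {g : ℂ → E} (hg : ContinuousOn g (sphere 0 1)) :
    AEStronglyMeasurable g m := by
  have h : m.restrict (sphere 0 1) = m :=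
    Measure.restrict_eq_self_of_ae_mem (by simpa using ae_m_norm_eq_one)
  rw [← h]
  exact hg.aestronglyMeasurable isClosed_sphere.measurableSet

theorem integral_m_eq_circleAverage [NormedSpace ℝ E] {g : ℂ → E}
    (hg : AEStronglyMeasurable g m) : ∫ z, g z ∂m = Real.circleAverage g 0 1 := by
  have hg' := hg.mono_ac
    (Measure.absolutelyContinuous_smul (ENNReal.inv_ne_zero.2 ENNReal.ofReal_ne_top))
  rw [m, integral_smul_measure, integral_map (by fun_prop) hg', Real.circleAverage_def,
    intervalIntegral.integral_of_le (by positivity)]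
  simp [circleMap, ENNReal.toReal_ofReal Real.pi_pos.le]

theorem integral_m_of_diffContOnCl [NormedSpace ℂ E] [CompleteSpace E] {g : ℂ → E}
    (hg : DiffContOnCl ℂ g (ball 0 1)) : ∫ z, g z ∂m = g 0 := by
  have hcont : ContinuousOn g (sphere 0 1) := hg.continuousOn_ball.mono sphere_subset_closedBall
  rw [integral_m_eq_circleAverage (aestronglyMeasurable_m_of_continuousOn hcont)]
  exact DiffContOnCl.circleAverage (by rwa [abs_one])

end CircleMeasure

section RadialLimit

variable {E : Type*} [NormedAddCommGroup E] {g G : ℂ → E}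

/-- `G` is the boundary function of `g`: at `m`-almost every point of the unit circle, `G` is the
radial limit of `g`. -/
def HasRadialLimit (g G : ℂ → E) : Prop :=
  ∀ᵐ z ∂m, Tendsto (fun r : ℝ => g (r * z)) (𝓝[<] 1) (𝓝 (G z))

theorem ofReal_mul_mem_ball {r : ℝ} (hr : r ∈ Ioo 0 1) {z : ℂ} (hz : ‖z‖ ≤ 1) :
    (r : ℂ) * z ∈ ball 0 1 := by
  rw [mem_ball_zero_iff, norm_mul, norm_real, Real.norm_of_nonneg hr.1.le]
  exact (mul_le_of_le_one_right hr.1.le hz).trans_lt hr.2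

theorem exists_seq_tendsto_nhdsLT_one :
    ∃ r : ℕ → ℝ, (∀ n, r n ∈ Ioo 0 1) ∧ Tendsto r atTop (𝓝[<] 1) := by
  obtain ⟨r, -, hr, hlim⟩ := exists_seq_strictMono_tendsto' (zero_lt_one' ℝ)
  exact ⟨r, hr, tendsto_nhdsWithin_iff.2 ⟨hlim, Eventually.of_forall fun n => (hr n).2⟩⟩

namespace HasRadialLimit

theorem congr {G' : ℂ → E} (hG : HasRadialLimit g G) (h : G =ᵐ[m] G') : HasRadialLimit g G' := by
  filter_upwards [hG, h] with z hz hGG'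
  rwa [← hGG']

theorem of_continuous (hg : Continuous g) : HasRadialLimit g g := by
  refine ae_of_all _ fun z => tendsto_nhdsWithin_of_tendsto_nhds ?_
  have hcont : Continuous fun r : ℝ => g (r * z) := by fun_prop
  simpa using hcont.tendsto 1

theorem mul {g₁ g₂ G₁ G₂ : ℂ → ℂ} (h₁ : HasRadialLimit g₁ G₁) (h₂ : HasRadialLimit g₂ G₂) :
    HasRadialLimit (fun z => g₁ z * g₂ z) (fun z => G₁ z * G₂ z) := by
  filter_upwards [h₁, h₂] with z hz₁ hz₂ using hz₁.mul hz₂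

theorem pow {g G : ℂ → ℂ} (h : HasRadialLimit g G) (k : ℕ) :
    HasRadialLimit (fun z => g z ^ k) (fun z => G z ^ k) := by
  filter_upwards [h] with z hz using hz.pow k

theorem dslope_zero {g G : ℂ → ℂ} (h : HasRadialLimit g G) :
    HasRadialLimit (dslope g 0) (fun z => (G z - g 0) / z) := by
  filter_upwards [h, of_continuous continuous_id', ae_m_norm_eq_one] with z hG hid hz
  have hz0 : z ≠ 0 := norm_ne_zero_iff.1 (hz ▸ one_ne_zero)
  refine ((hG.sub_const (g 0)).div hid hz0).congr' ?_
  filter_upwards [nhdsWithin_le_nhds (lt_mem_nhds (zero_lt_one' ℝ))] with r hr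
  have hrz : (r : ℂ) * z ≠ 0 := mul_ne_zero (ofReal_ne_zero.2 hr.ne') hz0
  rw [dslope_of_ne _ hrz, slope_def_field, sub_zero, Pi.div_apply]

theorem aestronglyMeasurable (hG : HasRadialLimit g G) (hg : ContinuousOn g (ball 0 1)) :
    AEStronglyMeasurable G m := by
  obtain ⟨r, hr, hlim⟩ := exists_seq_tendsto_nhdsLT_one
  refine aestronglyMeasurable_of_tendsto_ae atTop (f := fun n z => g (r n * z)) (fun n => ?_)
    (hG.mono fun z hz => hz.comp hlim)
  exact aestronglyMeasurable_m_of_continuousOn <| hg.comp (by fun_prop) fun z hz =>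
    ofReal_mul_mem_ball (hr n) (mem_sphere_zero_iff_norm.1 hz).le

theorem integral_eq [NormedSpace ℂ E] [CompleteSpace E] {C : ℝ} (hG : HasRadialLimit g G)
    (hg : DifferentiableOn ℂ g (ball 0 1)) (hC : ∀ z ∈ ball (0 : ℂ) 1, ‖g z‖ ≤ C) :
    ∫ z, G z ∂m = g 0 := by
  obtain ⟨r, hr, hlim⟩ := exists_seq_tendsto_nhdsLT_one
  have hdil (n : ℕ) : DiffContOnCl ℂ (fun z => g (r n * z)) (ball 0 1) := by
    refine DifferentiableOn.diffContOnCl (hg.comp (by fun_prop) fun z hz => ?_)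
    rw [closure_ball 0 one_ne_zero, mem_closedBall_zero_iff] at hz
    exact ofReal_mul_mem_ball (hr n) hz
  have hmean (n : ℕ) : ∫ z, g (r n * z) ∂m = g 0 := by
    simpa using integral_m_of_diffContOnCl (hdil n)
  have hlimit : Tendsto (fun n => ∫ z, g (r n * z) ∂m) atTop (𝓝 (∫ z, G z ∂m)) := by
    refine tendsto_integral_of_dominated_convergence (fun _ => C) (fun n => ?_)
      (integrable_const C) (fun n => ?_) (hG.mono fun z hz => hz.comp hlim)
    · exact aestronglyMeasurable_m_of_continuousOn
        ((hdil n).continuousOn_ball.mono sphere_subset_closedBall)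
    · filter_upwards [ae_m_norm_eq_one] with z hz using hC _ (ofReal_mul_mem_ball (hr n) hz.le)
  simp only [hmean] at hlimit
  exact tendsto_nhds_unique hlimit tendsto_const_nhds

end HasRadialLimit

end RadialLimit

section Moments

theorem exists_laurent_norm_sub_le {φ : ℂ → ℂ} (hφ : ContinuousOn φ (sphere 0 1)) {ε : ℝ}
    (hε : 0 < ε) :
    ∃ (s : Finset ℤ) (c : ℤ → ℂ), ∀ z : ℂ, ‖z‖ = 1 → ‖φ z - ∑ k ∈ s, c k * z ^ k‖ ≤ ε := by
  have : Fact (0 < 2 * Real.pi) := ⟨Real.two_pi_pos⟩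
  let ψ : C(AddCircle (2 * Real.pi), ℂ) :=
    ⟨fun x => φ (AddCircle.toCircle x), hφ.comp_continuous (by fun_prop) fun x =>
      mem_sphere_zero_iff_norm.2 (Circle.norm_coe _)⟩
  have hψ : ψ ∈ (Submodule.span ℂ (range <| @fourier (2 * Real.pi))).topologicalClosure  := by
    rw [span_fourier_closure_eq_top]
    exact Submodule.mem_top
  obtain ⟨P, hP, hdist⟩ := Metric.mem_closure_iff.1 hψ ε hε
  obtain ⟨c, rfl⟩ := Finsupp.mem_span_range_iff_exists_finsupp.1 hP
  refine ⟨c.support, c, fun z hz => ?_⟩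
  have hz' : (AddCircle.toCircle (z.arg : AddCircle (2 * Real.pi)) : ℂ) = z := by
    rw [AddCircle.toCircle_apply_mk, Circle.coe_exp, div_self Real.two_pi_pos.ne']
    simpa [hz] using norm_mul_exp_arg_mul_I z
  have h := (ContinuousMap.dist_apply_le_dist (f := ψ)
    (z.arg : AddCircle (2 * Real.pi))).trans hdist.le
  rw [dist_eq_norm] at h
  simpa [ψ, hz', Finsupp.sum, ContinuousMap.coe_sum, fourier_apply, AddCircle.toCircle_zsmul]
    using h

variable {ν ν' : Measure ℂ}

theorem integral_zpow_eq_of_integral_pow_eq (hν : ∀ᵐ z ∂ν, ‖z‖ = 1) (hν' : ∀ᵐ z ∂ν', ‖z‖ = 1)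
    (h : ∀ k : ℕ, ∫ z, z ^ k ∂ν = ∫ z, z ^ k ∂ν') (k : ℤ) :
    ∫ z, z ^ k ∂ν = ∫ z, z ^ k ∂ν' := by
  have hneg {ρ : Measure ℂ} (hρ : ∀ᵐ z ∂ρ, ‖z‖ = 1) (k : ℕ) :
      ∫ z, z ^ (-(k : ℤ)) ∂ρ = conj (∫ z, z ^ k ∂ρ) := by
    rw [← integral_conj]
    refine integral_congr_ae ?_
    filter_upwards [hρ] with z hz
    rw [zpow_neg, zpow_natCast, inv_eq_conj (by simp [hz])]
  obtain ⟨k, rfl | rfl⟩ := k.eq_nat_or_neg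
  · simpa using h k
  · rw [hneg hν, hneg hν', h]

variable [IsFiniteMeasure ν]

theorem integrable_laurent (hν : ∀ᵐ z ∂ν, ‖z‖ = 1) (s : Finset ℤ) (c : ℤ → ℂ) :
    Integrable (fun z => ∑ k ∈ s, c k * z ^ k) ν := by
  refine integrable_finsetSum _ fun k _ => Integrable.const_mul ?_ _
  refine Integrable.of_bound (C := 1) (by fun_prop) ?_
  filter_upwards [hν] with z hz
  simp [hz]

theorem exists_laurent_integral_norm_sub_le (hν : ∀ᵐ z ∂ν, ‖z‖ = 1) {φ : ℂ → ℂ}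
    (hφ : Integrable φ ν) {ε : ℝ} (hε : 0 < ε) :
    ∃ (s : Finset ℤ) (c : ℤ → ℂ), ∫ z, ‖φ z - ∑ k ∈ s, c k * z ^ k‖ ∂ν ≤ ε := by
  obtain ⟨ψ, hφψ, hψ⟩ := hφ.exists_boundedContinuous_integral_sub_le (half_pos hε)
  set δ : ℝ := ε / 2 / (ν.real univ + 1)
  have hδ : 0 < δ := by positivity
  obtain ⟨s, c, hP⟩ := exists_laurent_norm_sub_le ψ.continuous.continuousOn hδ
  refine ⟨s, c, ?_⟩
  have hPint := integrable_laurent hν s c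
  have hψP : ∫ z, ‖ψ z - ∑ k ∈ s, c k * z ^ k‖ ∂ν ≤ ε / 2 := calc
    _ ≤ ∫ _, δ ∂ν := integral_mono_ae (hψ.sub hPint).norm (integrable_const _) (hν.mono hP)
    _ = ν.real univ * δ := by rw [integral_const, smul_eq_mul]
    _ ≤ (ν.real univ + 1) * δ := by gcongr; exact le_add_of_nonneg_right zero_le_one
    _ = ε / 2 := mul_div_cancel₀ _ (by positivity)
  calc
    _ ≤ ∫ z, (‖φ z - ψ z‖ + ‖ψ z - ∑ k ∈ s, c k * z ^ k‖) ∂ν :=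
      integral_mono (hφ.sub hPint).norm ((hφ.sub hψ).norm.add (hψ.sub hPint).norm)
        fun z => norm_sub_le_norm_sub_add_norm_sub _ _ _
    _ = ∫ z, ‖φ z - ψ z‖ ∂ν + ∫ z, ‖ψ z - ∑ k ∈ s, c k * z ^ k‖ ∂ν :=
      integral_add (hφ.sub hψ).norm (hψ.sub hPint).norm
    _ ≤ ε := by linarith

theorem measure_eq_of_integral_pow_eq [IsFiniteMeasure ν'] (hν : ∀ᵐ z ∂ν, ‖z‖ = 1)
    (hν' : ∀ᵐ z ∂ν', ‖z‖ = 1) (h : ∀ k : ℕ, ∫ z, z ^ k ∂ν = ∫ z, z ^ k ∂ν') :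
    ν = ν' := by
  refine ext_of_forall_integral_eq_of_IsFiniteMeasure fun φ => ofReal_injective ?_
  rw [← integral_complex_ofReal, ← integral_complex_ofReal]
  refine eq_of_forall_dist_le fun ε hε => ?_
  have hφ (ρ : Measure ℂ) [IsFiniteMeasure ρ] : Integrable (fun z => (φ z : ℂ)) ρ :=
    (φ.integrable ρ).ofReal
  obtain ⟨s, c, hP⟩ := exists_laurent_integral_norm_sub_le (ae_add_measure_iff.2 ⟨hν, hν'⟩)
    (hφ (ν + ν')) hε
  set P : ℂ → ℂ := fun z => ∑ k ∈ s, c k * z ^ k with hPdef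
  have hPν := integrable_laurent hν s c
  have hPν' := integrable_laurent hν' s c
  have hPeq : ∫ z, P z ∂ν = ∫ z, P z ∂ν' := by
    have hint {ρ : Measure ℂ} [IsFiniteMeasure ρ] (hρ : ∀ᵐ z ∂ρ, ‖z‖ = 1) (k : ℤ) :
        Integrable (fun z => c k * z ^ k) ρ := by simpa using integrable_laurent hρ {k} c
    rw [hPdef, integral_finsetSum _ fun k _ => hint hν k,
      integral_finsetSum _ fun k _ => hint hν' k]
    simp only [integral_const_mul, integral_zpow_eq_of_integral_pow_eq hν hν' h]
  calc dist (∫ z, (φ z : ℂ) ∂ν) (∫ z, (φ z : ℂ) ∂ν')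
      = ‖∫ z, (φ z - P z) ∂ν - ∫ z, (φ z - P z) ∂ν'‖ := by
        rw [integral_sub (hφ ν) hPν, integral_sub (hφ ν') hPν', hPeq, sub_sub_sub_cancel_right,
          dist_eq_norm]
    _ ≤ ∫ z, ‖φ z - P z‖ ∂ν + ∫ z, ‖φ z - P z‖ ∂ν' :=
        (norm_sub_le _ _).trans (add_le_add (norm_integral_le_integral_norm _)
          (norm_integral_le_integral_norm _))
    _ = ∫ z, ‖φ z - P z‖ ∂(ν + ν') :=
        (integral_add_measure ((hφ ν).sub hPν).norm ((hφ ν').sub hPν').norm).symm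
    _ ≤ ε := hP

variable {X : Type*} [MeasurableSpace X] {μ : Measure X} [IsFiniteMeasure μ]

theorem integral_mul_comp_eq_zero_of_zpow {T u : X → ℂ} (hT : AEMeasurable T μ)
    (hT1 : ∀ᵐ x ∂μ, ‖T x‖ = 1) (hu : AEStronglyMeasurable u μ) {C : ℝ}
    (hC : ∀ᵐ x ∂μ, ‖u x‖ ≤ C) (h : ∀ k : ℤ, ∫ x, u x * T x ^ k ∂μ = 0) {φ : ℂ → ℂ}
    (hφ : Integrable φ (μ.map T)) : ∫ x, u x * φ (T x) ∂μ = 0 := by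
  obtain ⟨K, hK, huK⟩ : ∃ K > 0, ∀ᵐ x ∂μ, ‖u x‖ ≤ K :=
    ⟨|C| + 1, by positivity, hC.mono fun x hx => by linarith [le_abs_self C]⟩
  refine eq_of_forall_dist_le fun ε hε => ?_
  have hν : ∀ᵐ z ∂μ.map T, ‖z‖ = 1 := (ae_map_iff hT (measurableSet_eq_fun (by fun_prop)
    (by fun_prop))).2 hT1
  obtain ⟨s, c, hP⟩ := exists_laurent_integral_norm_sub_le hν hφ (div_pos hε hK)
  set P : ℂ → ℂ := fun z => ∑ k ∈ s, c k * z ^ k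
  have hint {ψ : ℂ → ℂ} (hψ : Integrable ψ (μ.map T)) : Integrable (fun x => u x * ψ (T x)) μ :=
    (hψ.comp_aemeasurable hT).bdd_mul hu huK
  have hPint : Integrable P (μ.map T) := integrable_laurent hν s c
  have huP : ∫ x, u x * P (T x) ∂μ = 0 := by
    have hterm (k : ℤ) : Integrable (fun x => u x * (c k * T x ^ k)) μ := by
      simpa using hint (integrable_laurent hν {k} c)
    simp only [P, Finset.mul_sum]
    rw [integral_finsetSum _ fun k _ => hterm k]
    simp only [mul_left_comm (u _), integral_const_mul, h, mul_zero, Finset.sum_const_zero]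
  calc dist (∫ x, u x * φ (T x) ∂μ) 0
      = ‖∫ x, u x * (φ (T x) - P (T x)) ∂μ‖ := by
        simp only [mul_sub]
        rw [integral_sub (hint hφ) (hint hPint), huP, sub_zero, dist_zero_right]
    _ ≤ ∫ x, K * ‖φ (T x) - P (T x)‖ ∂μ := by
        refine norm_integral_le_of_norm_le
          (((hφ.sub hPint).comp_aemeasurable hT).norm.const_mul K) ?_
        filter_upwards [huK] with x hx
        rw [norm_mul]
        gcongr
    _ = K * ∫ z, ‖φ z - P z‖ ∂μ.map T := by
        rw [integral_const_mul,
          integral_map hT (f := fun z => ‖φ z - P z‖) (hφ.sub hPint).norm.aestronglyMeasurable]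
    _ ≤ ε := (le_div_iff₀' hK).1 hP

end Moments

section MeanIndependence

variable {X Y : Type*} [MeasurableSpace X] [MeasurableSpace Y] {μ : Measure X} {S : X → Y}

/-- `g` is mean independent of `S`: the conditional expectation of `g` given `S` is the constant
`∫ g`. This is expressed by integrating `g` against the integrable functions of `S`, which avoids
conditional expectations. -/
structure IsMeanIndep (μ : Measure X) (g : X → ℂ) (S : X → Y) : Prop where
  integrable_mul : ∀ Ψ : Y → ℂ, Integrable Ψ (μ.map S) → Integrable (fun x => g x * Ψ (S x)) μ
  integral_mul : ∀ Ψ : Y → ℂ, Integrable Ψ (μ.map S) →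
    ∫ x, g x * Ψ (S x) ∂μ = (∫ x, g x ∂μ) * ∫ x, Ψ (S x) ∂μ

namespace IsMeanIndep

variable {g : X → ℂ}

theorem integrable [IsFiniteMeasure μ] (h : IsMeanIndep μ g S) : Integrable g μ := by
  simpa using h.integrable_mul (fun _ => 1) (integrable_const 1)

theorem const_mul (h : IsMeanIndep μ g S) (c : ℂ) : IsMeanIndep μ (fun x => c * g x) S where
  integrable_mul Ψ hΨ := by simpa only [mul_assoc] using (h.integrable_mul Ψ hΨ).const_mul c
  integral_mul Ψ hΨ := by simp only [mul_assoc, integral_const_mul, h.integral_mul Ψ hΨ]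

theorem sum [IsFiniteMeasure μ] {ι : Type*} {s : Finset ι} {g : ι → X → ℂ}
    (h : ∀ i ∈ s, IsMeanIndep μ (g i) S) : IsMeanIndep μ (fun x => ∑ i ∈ s, g i x) S where
  integrable_mul Ψ hΨ := by
    simp only [Finset.sum_mul]
    exact integrable_finsetSum _ fun i hi => (h i hi).integrable_mul Ψ hΨ
  integral_mul Ψ hΨ := by
    simp only [Finset.sum_mul]
    rw [integral_finsetSum _ fun i hi => (h i hi).integrable_mul Ψ hΨ,
      integral_finsetSum _ fun i hi => (h i hi).integrable, Finset.sum_mul]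
    exact Finset.sum_congr rfl fun i hi => (h i hi).integral_mul Ψ hΨ

theorem star (h : IsMeanIndep μ g S) : IsMeanIndep μ (fun x => conj (g x)) S where
  integrable_mul Ψ hΨ := by
    have h' := conjCLE.integrable_comp_iff.2
      (h.integrable_mul (fun y => conj (Ψ y)) (conjCLE.integrable_comp_iff.2 hΨ))
    simpa only [conjCLE_apply, map_mul, conj_conj] using h'
  integral_mul Ψ hΨ := by
    have h' := congrArg conj
      (h.integral_mul (fun y => conj (Ψ y)) (conjCLE.integrable_comp_iff.2 hΨ))
    simpa only [map_mul, ← integral_conj, conj_conj] using h'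

theorem integral_mul_real {g : X → ℝ} (h : IsMeanIndep μ (fun x => (g x : ℂ)) S) {Ψ : Y → ℝ}
    (hΨ : Integrable Ψ (μ.map S)) :
    ∫ x, g x * Ψ (S x) ∂μ = (∫ x, g x ∂μ) * ∫ x, Ψ (S x) ∂μ := by
  have h' := h.integral_mul (fun y => (Ψ y : ℂ)) hΨ.ofReal
  simp only [← ofReal_mul, integral_complex_ofReal] at h'
  exact_mod_cast h'

end IsMeanIndep

end MeanIndependence

section TransferOperator

variable {X : Type*} [MeasurableSpace X] {μ : Measure X} {T : X → X} {u : X → ℂ} {β : ℂ}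

/-- `u` is a unimodular eigenfunction, with eigenvalue `β`, of the transfer operator of the
measure-preserving map `T`, i.e. of the transpose of `φ ↦ φ ∘ T`. Then `u ∘ T^[n]` behaves
like a reversed martingale, which is what decorrelates separated blocks. -/
structure IsUnimodularTransferEigenfunction (μ : Measure X) (T : X → X) (u : X → ℂ) (β : ℂ) :
    Prop where
  measurePreserving : MeasurePreserving T μ μ
  aestronglyMeasurable : AEStronglyMeasurable u μ
  norm_eq_one : ∀ᵐ x ∂μ, ‖u x‖ = 1
  integral_mul_comp : ∀ φ : X → ℂ, Integrable φ μ →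
    ∫ x, u x * φ (T x) ∂μ = β * ∫ x, u x * φ x ∂μ

theorem integral_comp_of_measurePreserving (hT : MeasurePreserving T μ μ) {E : Type*}
    [NormedAddCommGroup E] [NormedSpace ℝ E] {φ : X → E} (hφ : AEStronglyMeasurable φ μ) :
    ∫ x, φ (T x) ∂μ = ∫ x, φ x ∂μ := by
  rw [← integral_map hT.aemeasurable (by rwa [hT.map_eq]), hT.map_eq]

namespace IsUnimodularTransferEigenfunction

variable (h : IsUnimodularTransferEigenfunction μ T u β)
include h

theorem aestronglyMeasurable_iterate (n : ℕ) : AEStronglyMeasurable (fun x => u (T^[n] x)) μ :=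
  h.aestronglyMeasurable.comp_measurePreserving (h.measurePreserving.iterate n)

theorem norm_iterate_eq_one (n : ℕ) : ∀ᵐ x ∂μ, ‖u (T^[n] x)‖ = 1 :=
  (h.measurePreserving.iterate n).quasiMeasurePreserving.ae h.norm_eq_one

theorem integral_mul_iterate (j : ℕ) {φ : X → ℂ} (hφ : Integrable φ μ) :
    ∫ x, u x * φ (T^[j] x) ∂μ = β ^ j * ∫ x, u x * φ x ∂μ := by
  induction j with
  | zero => simp
  | succ j ih =>
    have hφj := (h.measurePreserving.iterate j).integrable_comp_of_integrable hφ
    simp only [Function.iterate_succ_apply]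
    exact (h.integral_mul_comp _ hφj).trans (by rw [Function.comp_def, ih, pow_succ', mul_assoc])

theorem integrable_mul_conj_mul (n l : ℕ) {ψ : X → ℂ} (hψ : Integrable ψ μ) :
    Integrable (fun x => u (T^[n] x) * conj (u (T^[l] x)) * ψ x) μ := by
  refine hψ.bdd_mul (c := 1)
    ((h.aestronglyMeasurable_iterate n).mul (h.aestronglyMeasurable_iterate l).star) ?_
  filter_upwards [h.norm_iterate_eq_one n, h.norm_iterate_eq_one l] with x hn hl
  simp [hn, hl]

theorem integral_mul_conj_mul_iterate (n j i : ℕ) {Ψ : X → ℂ} (hΨ : Integrable Ψ μ) :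
    ∫ x, u (T^[n] x) * conj (u (T^[j + n] x)) * Ψ (T^[i + (j + n)] x) ∂μ
      = β ^ j * ∫ x, Ψ x ∂μ := by
  have hΨi : Integrable (fun x => Ψ (T^[i] x)) μ :=
    (h.measurePreserving.iterate i).integrable_comp_of_integrable hΨ
  have hχ : Integrable (fun x => conj (u x) * Ψ (T^[i] x)) μ :=
    hΨi.bdd_mul (c := 1) h.aestronglyMeasurable.star (h.norm_eq_one.mono fun x hx => by simp [hx])
  have hχj : Integrable (fun x => u x * (conj (u (T^[j] x)) * Ψ (T^[i] (T^[j] x)))) μ :=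
    ((h.measurePreserving.iterate j).integrable_comp_of_integrable hχ).bdd_mul (c := 1)
      h.aestronglyMeasurable (h.norm_eq_one.mono fun x hx => hx.le)
  calc _ = ∫ x, u x * (conj (u (T^[j] x)) * Ψ (T^[i] (T^[j] x))) ∂μ := by
        rw [← integral_comp_of_measurePreserving (h.measurePreserving.iterate n)
          hχj.aestronglyMeasurable]
        simp only [Function.iterate_add_apply, mul_assoc]
    _ = β ^ j * ∫ x, u x * (conj (u x) * Ψ (T^[i] x)) ∂μ := h.integral_mul_iterate j hχ
    _ = β ^ j * ∫ x, Ψ (T^[i] x) ∂μ := by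
        congr 1
        refine integral_congr_ae (h.norm_eq_one.mono fun x hx => ?_)
        simp [← mul_assoc, mul_conj', hx]
    _ = β ^ j * ∫ x, Ψ x ∂μ := by
        rw [integral_comp_of_measurePreserving (h.measurePreserving.iterate i)
          hΨ.aestronglyMeasurable]

theorem integrable_prod_norm_sq_sum [IsFiniteMeasure μ] {ι : Type*} (s : Finset ι)
    (A : ι → Finset ℕ) (a : ℕ → ℂ) (d : ℕ → ℕ) :
    Integrable (fun x => ∏ k ∈ s, ‖∑ n ∈ A k, a n * u (T^[d n] x)‖ ^ 2) μ := by
  have hmeas : AEStronglyMeasurable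
      (fun x => ∏ k ∈ s, ‖∑ n ∈ A k, a n * u (T^[d n] x)‖ ^ 2) μ :=
    Finset.aestronglyMeasurable_fun_prod _ fun k _ => (Finset.aestronglyMeasurable_fun_sum _
      fun n _ => (h.aestronglyMeasurable_iterate (d n)).const_mul (a n)).norm.pow 2
  refine Integrable.of_bound hmeas (∏ k ∈ s, (∑ n ∈ A k, ‖a n‖) ^ 2) ?_
  filter_upwards [ae_all_iff.2 h.norm_iterate_eq_one] with x hx
  rw [Real.norm_of_nonneg (by positivity)]
  gcongr with k
  exact norm_sum_le_of_le _ fun n _ => by simp [hx]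

variable [IsProbabilityMeasure μ]

theorem isMeanIndep_mul_conj_of_le {n l N : ℕ} (hnl : n ≤ l) (hlN : l ≤ N) :
    IsMeanIndep μ (fun x => u (T^[n] x) * conj (u (T^[l] x))) T^[N] := by
  obtain ⟨j, rfl⟩ := Nat.exists_eq_add_of_le' hnl
  obtain ⟨i, rfl⟩ := Nat.exists_eq_add_of_le' hlN
  have hN := h.measurePreserving.iterate (i + (j + n))
  have hmean : ∫ x, u (T^[n] x) * conj (u (T^[j + n] x)) ∂μ = β ^ j := by
    simpa using h.integral_mul_conj_mul_iterate n j i (integrable_const 1)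
  refine ⟨fun Ψ hΨ => ?_, fun Ψ hΨ => ?_⟩ <;> rw [hN.map_eq] at hΨ
  · exact h.integrable_mul_conj_mul n (j + n) (hN.integrable_comp_of_integrable hΨ)
  · rw [hmean, h.integral_mul_conj_mul_iterate n j i hΨ,
      integral_comp_of_measurePreserving hN hΨ.aestronglyMeasurable]

theorem isMeanIndep_mul_conj {n l N : ℕ} (hn : n ≤ N) (hl : l ≤ N) :
    IsMeanIndep μ (fun x => u (T^[n] x) * conj (u (T^[l] x))) T^[N] := by
  rcases le_total n l with hnl | hln
  · exact h.isMeanIndep_mul_conj_of_le hnl hl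
  · simpa only [map_mul, conj_conj, mul_comm] using (h.isMeanIndep_mul_conj_of_le hln hn).star

theorem isMeanIndep_norm_sq_sum (a : ℕ → ℂ) {s : Finset ℕ} {N : ℕ} (hs : ∀ n ∈ s, n ≤ N) :
    IsMeanIndep μ (fun x => ((‖∑ n ∈ s, a n * u (T^[n] x)‖ ^ 2 : ℝ) : ℂ)) T^[N] := by
  have hexpand (x : X) : ((‖∑ n ∈ s, a n * u (T^[n] x)‖ ^ 2 : ℝ) : ℂ)
      = ∑ n ∈ s, ∑ l ∈ s, a n * conj (a l) * (u (T^[n] x) * conj (u (T^[l] x))) := by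
    rw [ofReal_pow, ← mul_conj', map_sum, Finset.sum_mul_sum]
    simp only [map_mul, mul_mul_mul_comm]
  simp only [hexpand]
  exact .sum fun n hn => .sum fun l hl => (h.isMeanIndep_mul_conj (hs n hn) (hs l hl)).const_mul _

theorem integral_prod_norm_sq_sum {ι : Type*} [LinearOrder ι] (s : Finset ι) {A : ι → Finset ℕ}
    (hA : ∀ i j, i < j → ∀ x ∈ A i, ∀ y ∈ A j, x ≤ y) (a : ℕ → ℂ) :
    ∫ x, ∏ k ∈ s, ‖∑ n ∈ A k, a n * u (T^[n] x)‖ ^ 2 ∂μ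
      = ∏ k ∈ s, ∫ x, ‖∑ n ∈ A k, a n * u (T^[n] x)‖ ^ 2 ∂μ := by
  induction s using Finset.induction_on_min with
  | empty => simp
  | insert i s hi ih =>
    have his : i ∉ s := fun his => (hi i his).false
    set N := (A i).sup id
    set Ψ : X → ℝ := fun y => ∏ k ∈ s, ‖∑ n ∈ A k, a n * u (T^[n - N] y)‖ ^ 2
    have hΨ : Integrable Ψ (μ.map T^[N]) := by
      rw [(h.measurePreserving.iterate N).map_eq]
      exact h.integrable_prod_norm_sq_sum s A a (· - N)
    have hlater (x : X) : ∏ k ∈ s, ‖∑ n ∈ A k, a n * u (T^[n] x)‖ ^ 2 = Ψ (T^[N] x) := by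
      refine Finset.prod_congr rfl fun k hk => ?_
      congr 2
      refine Finset.sum_congr rfl fun n hn => ?_
      have hNn : N ≤ n := Finset.sup_le fun l hl => hA i k (hi k hk) l hl n hn
      rw [← Function.iterate_add_apply, Nat.sub_add_cancel hNn]
    simp only [Finset.prod_insert his, ← ih, hlater]
    exact (h.isMeanIndep_norm_sq_sum a fun n hn => Finset.le_sup (f := id) hn).integral_mul_real hΨ

end IsUnimodularTransferEigenfunction

end TransferOperator

section InnerFunction

/-- `f` is an inner function with boundary function `F`, which is determined only up to `m`-null
sets. Unimodular constants count as inner. -/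
structure IsInner (f F : ℂ → ℂ) : Prop where
  differentiableOn : DifferentiableOn ℂ f (ball 0 1)
  mapsTo : MapsTo f (ball 0 1) (closedBall 0 1)
  hasRadialLimit : HasRadialLimit f F
  norm_eq_one : ∀ᵐ z ∂m, ‖F z‖ = 1

theorem integral_m_pow (k : ℕ) : ∫ z, z ^ k ∂m = 0 ^ k :=
  integral_m_of_diffContOnCl (by fun_prop : Differentiable ℂ fun z : ℂ => z ^ k).diffContOnCl

namespace IsInner

variable {f F : ℂ → ℂ}

theorem congr {G : ℂ → ℂ} (h : IsInner f F) (hFG : F =ᵐ[m] G) : IsInner f G where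
  differentiableOn := h.differentiableOn
  mapsTo := h.mapsTo
  hasRadialLimit := h.hasRadialLimit.congr hFG
  norm_eq_one := by
    filter_upwards [h.norm_eq_one, hFG] with z hz hFG
    rwa [← hFG]

theorem aemeasurable (h : IsInner f F) : AEMeasurable F m :=
  (h.hasRadialLimit.aestronglyMeasurable h.differentiableOn.continuousOn).aemeasurable

theorem norm_le_one (h : IsInner f F) {z : ℂ} (hz : z ∈ ball 0 1) : ‖f z‖ ≤ 1 :=
  mem_closedBall_zero_iff.1 (h.mapsTo hz)

theorem integral_mul_pow (h : IsInner f F) {g G : ℂ → ℂ} (hgG : HasRadialLimit g G)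
    (hg : DifferentiableOn ℂ g (ball 0 1)) {C : ℝ} (hgC : ∀ z ∈ ball (0 : ℂ) 1, ‖g z‖ ≤ C)
    (k : ℕ) : ∫ z, G z * F z ^ k ∂m = g 0 * f 0 ^ k := by
  refine (hgG.mul (h.hasRadialLimit.pow k)).integral_eq (C := C)
    (hg.mul (h.differentiableOn.pow k)) fun z hz => ?_
  rw [norm_mul, norm_pow]
  exact (mul_le_of_le_one_right (norm_nonneg _)
    (pow_le_one₀ (norm_nonneg _) (h.norm_le_one hz))).trans (hgC z hz)

theorem integral_pow (h : IsInner f F) (k : ℕ) : ∫ z, F z ^ k ∂m = f 0 ^ k := by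
  simpa using h.integral_mul_pow (.of_continuous (continuous_const (y := 1)))
    (differentiableOn_const 1) (C := 1) (by simp) k

theorem integral_id_mul_pow (h : IsInner f F) (k : ℕ) : ∫ z, z * F z ^ k ∂m = 0 := by
  simpa using h.integral_mul_pow (.of_continuous continuous_id') differentiableOn_id
    (fun z hz => (mem_ball_zero_iff.1 hz).le) k

theorem integral_div_mul_pow (h : IsInner f F) (h0 : f 0 = 0) (k : ℕ) :
    ∫ z, F z / z * F z ^ k ∂m = deriv f 0 * 0 ^ k := by
  have hdslope : DifferentiableOn ℂ (dslope f 0) (ball 0 1) :=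
    (differentiableOn_dslope (ball_mem_nhds 0 one_pos)).2 h.differentiableOn
  have hschwarz (z : ℂ) (hz : z ∈ ball 0 1) : ‖dslope f 0 z‖ ≤ 1 := by
    simpa using norm_dslope_le_div_of_mapsTo_ball h.differentiableOn
      (by rw [h0]; exact h.mapsTo) hz
  simpa [h0] using h.integral_mul_pow h.hasRadialLimit.dslope_zero hdslope hschwarz k

theorem measurePreserving (h : IsInner f F) (h0 : f 0 = 0) (hF : Measurable F) :
    MeasurePreserving F m m := by
  refine ⟨hF, measure_eq_of_integral_pow_eq ?_ ae_m_norm_eq_one fun k => ?_⟩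
  · exact (ae_map_iff hF.aemeasurable (measurableSet_eq_fun (by fun_prop) (by fun_prop))).2
      h.norm_eq_one
  · rw [integral_map hF.aemeasurable (by fun_prop), h.integral_pow, integral_m_pow, h0]

theorem integral_id_mul_zpow (h : IsInner f F) (h0 : f 0 = 0) (k : ℤ) :
    ∫ z, z * F z ^ k ∂m = conj (deriv f 0) * ∫ z, F z * F z ^ k ∂m := by
  cases k with
  | ofNat k =>
    simp only [Int.ofNat_eq_natCast, zpow_natCast, ← pow_succ', h.integral_id_mul_pow,
      h.integral_pow, h0, zero_pow k.succ_ne_zero, mul_zero]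
  | negSucc k =>
    have hleft : ∫ z, z * F z ^ Int.negSucc k ∂m = ∫ z, conj (F z / z * F z ^ k) ∂m := by
      refine integral_congr_ae ?_
      filter_upwards [ae_m_norm_eq_one, h.norm_eq_one] with z hz hF
      simp only [map_mul, map_div₀, map_pow, ← inv_eq_conj hz, ← inv_eq_conj hF, zpow_negSucc,
        pow_succ', mul_inv, inv_pow, div_inv_eq_mul]
      ring
    have hright : ∫ z, F z * F z ^ Int.negSucc k ∂m = ∫ z, conj (F z ^ k) ∂m := by
      refine integral_congr_ae ?_
      filter_upwards [h.norm_eq_one] with z hF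
      have hF0 : F z ≠ 0 := norm_ne_zero_iff.1 (hF ▸ one_ne_zero)
      rw [map_pow, ← inv_eq_conj hF, zpow_negSucc, pow_succ', mul_inv, mul_inv_cancel_left₀ hF0,
        inv_pow]
    rw [hleft, hright, integral_conj, integral_conj, h.integral_div_mul_pow h0, h.integral_pow, h0,
      map_mul]

theorem integral_id_mul_comp (h : IsInner f F) (h0 : f 0 = 0) (hF : Measurable F) {φ : ℂ → ℂ}
    (hφ : Integrable φ m) :
    ∫ z, z * φ (F z) ∂m = conj (deriv f 0) * ∫ z, F z * φ (F z) ∂m := by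
  set β := conj (deriv f 0)
  have hmp := h.measurePreserving h0 hF
  have hid : AEStronglyMeasurable (fun z : ℂ => z) m := aestronglyMeasurable_id
  have hz1 : ∀ᵐ z ∂m, ‖z‖ ≤ 1 := ae_m_norm_eq_one.mono fun z hz => hz.le
  have hF1 : ∀ᵐ z ∂m, ‖F z‖ ≤ 1 := h.norm_eq_one.mono fun z hz => hz.le
  have hsub {ψ : ℂ → ℂ} (hψ : Integrable ψ m) : ∫ z, (z - β * F z) * ψ z ∂m
      = ∫ z, z * ψ z ∂m - β * ∫ z, F z * ψ z ∂m := by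
    simp only [sub_mul, mul_assoc]
    rw [integral_sub (hψ.bdd_mul hid hz1)
      ((hψ.bdd_mul hF.aestronglyMeasurable hF1).const_mul β), integral_const_mul]
  have hbound : ∀ᵐ z ∂m, ‖z - β * F z‖ ≤ 1 + ‖β‖ := by
    filter_upwards [hz1, h.norm_eq_one] with z hz hFz
    refine (norm_sub_le _ _).trans (add_le_add hz ?_)
    rw [norm_mul, hFz, mul_one]
  have hzpow (k : ℤ) : Integrable (fun z => F z ^ k) m :=
    .of_bound (hF.pow_const k).aestronglyMeasurable 1 (h.norm_eq_one.mono fun z hz => by simp [hz])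
  refine sub_eq_zero.1 ((hsub (hmp.integrable_comp_of_integrable hφ)).symm.trans ?_)
  refine integral_mul_comp_eq_zero_of_zpow (u := fun z => z - β * F z) hF.aemeasurable h.norm_eq_one
    (hid.sub (hF.const_mul β).aestronglyMeasurable) hbound (fun k => ?_) (by rwa [hmp.map_eq])
  rw [hsub (hzpow k), h.integral_id_mul_zpow h0, sub_self]

theorem isUnimodularTransferEigenfunction (h : IsInner f F) (h0 : f 0 = 0) (hF : Measurable F) :
    IsUnimodularTransferEigenfunction m F (fun z => z) (conj (deriv f 0)) where
  measurePreserving := h.measurePreserving h0 hF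
  aestronglyMeasurable := aestronglyMeasurable_id
  norm_eq_one := ae_m_norm_eq_one
  integral_mul_comp φ hφ := by
    rw [h.integral_id_mul_comp h0 hF hφ, integral_comp_of_measurePreserving
      (h.measurePreserving h0 hF) (φ := fun z => z * φ z)
      (aestronglyMeasurable_id.mul hφ.aestronglyMeasurable)]

theorem iterate_ae_eq (h : IsInner f F) (h0 : f 0 = 0) {G : ℂ → ℂ} (hG : Measurable G)
    (hFG : F =ᵐ[m] G) (n : ℕ) : F^[n] =ᵐ[m] G^[n] := by
  have hmp : MeasurePreserving G m m := (h.congr hFG).measurePreserving h0 hG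
  induction n with
  | zero => rfl
  | succ n ih =>
    filter_upwards [ih, (hmp.iterate n).quasiMeasurePreserving.ae hFG] with z hn hz
    rw [Function.iterate_succ_apply', Function.iterate_succ_apply', hn, hz]

theorem integral_prod_norm_sq_sum_iterate (h : IsInner f F) (h0 : f 0 = 0) {ι : Type*}
    [LinearOrder ι] (s : Finset ι) {A : ι → Finset ℕ}
    (hA : ∀ i j, i < j → ∀ x ∈ A i, ∀ y ∈ A j, x ≤ y) (a : ℕ → ℂ) :
    ∫ z, ∏ k ∈ s, ‖∑ n ∈ A k, a n * F^[n] z‖ ^ 2 ∂m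
      = ∏ k ∈ s, ∫ z, ‖∑ n ∈ A k, a n * F^[n] z‖ ^ 2 ∂m := by
  obtain ⟨G, hG, hFG⟩ := h.aemeasurable
  have hiter : ∀ᵐ z ∂m, ∀ n, F^[n] z = G^[n] z := ae_all_iff.2 (h.iterate_ae_eq h0 hG hFG)
  have hprod : ∫ z, ∏ k ∈ s, ‖∑ n ∈ A k, a n * F^[n] z‖ ^ 2 ∂m
      = ∫ z, ∏ k ∈ s, ‖∑ n ∈ A k, a n * G^[n] z‖ ^ 2 ∂m :=
    integral_congr_ae (hiter.mono fun z hz => by simp only [hz])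
  have hblock (k : ι) : ∫ z, ‖∑ n ∈ A k, a n * F^[n] z‖ ^ 2 ∂m
      = ∫ z, ‖∑ n ∈ A k, a n * G^[n] z‖ ^ 2 ∂m :=
    integral_congr_ae (hiter.mono fun z hz => by simp only [hz])
  simp only [hprod, hblock]
  exact ((h.congr hFG).isUnimodularTransferEigenfunction h0 hG).integral_prod_norm_sq_sum s hA a

end IsInner

end InnerFunction

theorem forall_lt_of_forall_lt_succ {α : Type*} [Preorder α] {p : ℕ} {A : Fin p → Finset α}
    (hne : ∀ k, (A k).Nonempty)
    (hsep : ∀ k : Fin p, ∀ h : (k : ℕ) + 1 < p, ∀ x ∈ A k, ∀ y ∈ A ⟨(k : ℕ) + 1, h⟩, x < y)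
    {i j : Fin p} (hij : i < j) : ∀ x ∈ A i, ∀ y ∈ A j, x < y := by
  obtain ⟨j, hj⟩ := j
  obtain ⟨d, rfl : j = i + d + 1⟩ := Nat.exists_eq_add_of_lt hij
  clear hij
  induction d with
  | zero => exact hsep i hj
  | succ d ih =>
    intro x hx y hy
    have hd : (i : ℕ) + d + 1 < p := Nat.lt_of_succ_lt hj
    obtain ⟨w, hw⟩ := hne ⟨_, hd⟩
    exact (ih hd x hx w hw).trans (hsep ⟨_, hd⟩ hj w hw y hy)

theorem stmt5 (f F : ℂ → ℂ)
    (hf : DifferentiableOn ℂ f (Metric.ball 0 1))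
    (hmap : Set.MapsTo f (Metric.ball 0 1) (Metric.ball 0 1))
    (h0 : f 0 = 0)
    (hbd : ∀ᵐ z ∂m, Filter.Tendsto (fun r : ℝ => f ((r : ℂ) * z))
      (nhdsWithin 1 (Set.Iio 1)) (nhds (F z)))
    (hinner : ∀ᵐ z ∂m, ‖F z‖ = 1)
    (p : ℕ) (A : Fin p → Finset ℕ)
    (hpos : ∀ k, ∀ x ∈ A k, 0 < x)
    (hsep : ∀ k : Fin p, ∀ h : (k : ℕ) + 1 < p,
      ∀ x ∈ A k, ∀ y ∈ A ⟨(k : ℕ) + 1, h⟩, x < y)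
    (a : ℕ → ℂ) :
    ∫ z, ∏ k : Fin p, ‖∑ n ∈ A k, a n * F^[n] z‖ ^ 2 ∂m
      = ∏ k : Fin p, ∫ z, ‖∑ n ∈ A k, a n * F^[n] z‖ ^ 2 ∂m := by
  have h : IsInner f F := ⟨hf, hmap.mono_right ball_subset_closedBall, hbd, hinner⟩
  by_cases hne : ∀ k, (A k).Nonempty
  · exact h.integral_prod_norm_sq_sum_iterate h0 Finset.univ
      (fun i j hij x hx y hy => (forall_lt_of_forall_lt_succ hne hsep hij x hx y hy).le) a
  · obtain ⟨k, hk⟩ := not_forall.1 hne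
    rw [Finset.not_nonempty_iff_eq_empty] at hk
    have hprod (z : ℂ) : ∏ k, ‖∑ n ∈ A k, a n * F^[n] z‖ ^ 2 = 0 :=
      Finset.prod_eq_zero (Finset.mem_univ k) (by simp [hk])
    rw [Finset.prod_eq_zero (Finset.mem_univ k) (by simp [hk])]
    simp only [hprod, integral_zero]
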